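/- arXiv:2112.11012 — 3 statements merged into one kernel-verified Lean document; each statement's English description precedes it below -/
import Mathlib

section
/- Let p be an odd prime, let s ≥ 2 be an integer, let α and β be integers with 0 ≤ α, β < p^{s−1}, and let l be an integer with 1 ≤ l ≤ p−1. Then C(α + p^s, β + l·p^{s−1}) ≡ C(α, β)·C(p, l) (mod p²). -/
/-!
Write `q = p ^ (s - 1)`. In `ℤ[X]` the Frobenius congruence `(1 + X) ^ q ≡ 1 + X ^ q (mod p)`
lifts under `p`-th powers to `(1 + X) ^ (p ^ s) ≡ (1 + X ^ q) ^ p (mod p ^ 2)`. Multiplying by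
`(1 + X) ^ α` and comparing coefficients of `X ^ (β + l * q)` gives the result: on the right-hand
side this coefficient is `∑ j, C(p, j) * C(α, β + (l - j) * q)`, and since `α, β < q` only the
term `j = l` survives.
-/

open Polynomial in
/-- Since `α, β < q`, writing the exponent `β + l * q` as `i + j * q` with `i ≤ α`
forces `j = l` and `i = β`. -/
lemma coeff_one_add_X_pow_mul (q n α β l : ℕ) (hα : α < q) (hβ : β < q) (hl : l ≤ n) :
    ((1 + X : ℤ[X]) ^ α * (1 + X ^ q) ^ n).coeff (β + l * q) =
      (α.choose β : ℤ) * (n.choose l : ℤ) := by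
  rw [add_comm 1 (X ^ q : ℤ[X]), add_pow (X ^ q), Finset.mul_sum, finsetSum_coeff,
    Finset.sum_eq_single l]
  · rw [one_pow, mul_one, ← mul_assoc, coeff_mul_natCast, ← pow_mul, mul_comm q l,
      coeff_mul_X_pow, coeff_one_add_X_pow]
  · intro j _ hj
    rw [one_pow, mul_one, ← mul_assoc, coeff_mul_natCast, ← pow_mul, coeff_mul_X_pow']
    split_ifs with h
    · rw [coeff_one_add_X_pow, Nat.choose_eq_zero_of_lt, Nat.cast_zero, zero_mul]
      rcases lt_or_gt_of_ne hj with hj | hj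
      · have : q * (j + 1) ≤ q * l := Nat.mul_le_mul_left q hj
        rw [mul_comm l q]
        rw [mul_add, mul_one] at this
        omega
      · have : q * (l + 1) ≤ q * j := Nat.mul_le_mul_left q hj
        rw [mul_comm l q] at *
        rw [mul_add, mul_one] at this
        omega
    · rw [zero_mul]
  · intro h
    exact absurd (Finset.mem_range.2 (Nat.lt_succ_of_le hl)) h

open Polynomial in
/-- The congruence `(1 + X) ^ (p ^ (t + 1)) ≡ (1 + X ^ (p ^ t)) ^ p (mod p ^ 2)`. -/
lemma sq_dvd_one_add_X_pow_sub (p t : ℕ) (hp : p.Prime) :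
    (p : ℤ[X]) ^ 2 ∣ (1 + X) ^ (p ^ (t + 1)) - (1 + X ^ (p ^ t)) ^ p := by
  obtain ⟨r, hr⟩ := exists_add_pow_prime_pow_eq hp (1 : ℤ[X]) X t
  have h : (p : ℤ[X]) ∣ (1 + X) ^ (p ^ t) - (1 + X ^ (p ^ t)) :=
    ⟨X * r, by rw [hr, one_pow]; ring⟩
  simpa [← pow_mul, ← pow_succ] using dvd_sub_pow_of_dvd_sub h 1

/-- Lemma 3.2(1): for an odd prime `p`, `s ≥ 2`, `0 ≤ α, β < p^(s-1)` and `1 ≤ l ≤ p-1`,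
`C(α + p^s, β + l·p^(s-1)) ≡ C(α, β) · C(p, l)  (mod p²)`. -/
theorem choose_congr_mod_sq (p s α β l : ℕ) (hp : p.Prime) (hodd : Odd p)
    (hs : 2 ≤ s) (hα : α < p ^ (s - 1)) (hβ : β < p ^ (s - 1))
    (hl : 1 ≤ l) (hl' : l ≤ p - 1) :
    (α + p ^ s).choose (β + l * p ^ (s - 1)) ≡ α.choose β * p.choose l [MOD p ^ 2] := by
  obtain ⟨t, rfl⟩ : ∃ t, s = t + 1 := ⟨s - 1, by omega⟩
  rw [Nat.add_sub_cancel] at *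
  obtain ⟨r, hr⟩ := (sq_dvd_one_add_X_pow_sub p t hp).mul_left
    ((1 + Polynomial.X : Polynomial ℤ) ^ α)
  have h := congrArg (fun f => Polynomial.coeff f (β + l * p ^ t)) hr
  simp only [mul_sub, ← pow_add, Polynomial.coeff_sub] at h
  rw [Polynomial.coeff_one_add_X_pow,
    coeff_one_add_X_pow_mul _ _ _ _ _ hα hβ (by omega), ← Nat.cast_pow,
    Polynomial.coeff_natCast_mul] at h
  refine (Nat.modEq_iff_dvd.2 ?_).symm
  rw [Nat.cast_mul, h]
  exact dvd_mul_right _ _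
end

section
/- Let s ≥ 2 be an integer and let α, β be integers with 0 ≤ α, β < 2^{s−1}. Then the following five congruences hold modulo 4: (1) C(α + 2^s, β + 2^{s−1}) ≡ 2·C(α, β); (2) C(α + 2^s, β + 2^s) ≡ C(α, β); (3) C(α + 2^{s−1} + 2^s, β + 2^{s−1}) ≡ C(α + 2^{s−1}, β + 2^{s−1}) + 2·C(α + 2^{s−1}, β); (4) C(α + 2^{s−1} + 2^s, β + 2^s) ≡ C(α + 2^{s−1}, β) + 2·C(α + 2^{s−1}, β + 2^{s−1}); (5) C(α + 2^{s−1} + 2^s, β + 2^{s−1} + 2^s) ≡ C(α + 2^{s−1}, β + 2^{s−1}). -/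
/-!
Over `ZMod 4` one has `(1 + X) ^ (2 * q) = 1 + 2 X ^ q + X ^ (2 * q)` whenever `q` is a power of
two: squaring this identity for `q` gives the one for `2 * q`, as the extra terms are multiples
of `4`. Multiplying by `(1 + X) ^ n` and comparing coefficients yields a three-term recurrence
modulo 4,
`C(n + 2q, k) ≡ C(n, k) + 2 C(n, k - q) + C(n, k - 2q)`,
with the convention that a negative lower index gives `0`. With `q = 2 ^ (s - 1)`, each of the five
congruences is an instance in which the remaining terms vanish because the lower index is negative
or exceeds the upper one.
-/

open Polynomial in
theorem one_add_X_pow_two_pow_succ (t : ℕ) :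
    (1 + X : (ZMod 4)[X]) ^ (2 * 2 ^ t) = 1 + 2 * X ^ 2 ^ t + X ^ (2 * 2 ^ t) := by
  induction t with
  | zero => ring
  | succ t ih =>
    have h4 : (4 : (ZMod 4)[X]) = 0 := by
      exact_mod_cast CharP.cast_eq_zero (ZMod 4)[X] 4
    rw [show 2 * 2 ^ (t + 1) = (2 * 2 ^ t) * 2 by ring, pow_mul, ih,
      show 2 ^ (t + 1) = 2 ^ t * 2 by ring, show 2 * 2 ^ t * 2 = 2 ^ t * 4 by ring,
      show 2 * 2 ^ t = 2 ^ t * 2 by ring]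
    simp only [pow_mul]
    generalize (X : (ZMod 4)[X]) ^ 2 ^ t = y
    linear_combination (y + y ^ 2 + y ^ 3) * h4

/-- The three-term recurrence modulo 4, obtained by comparing coefficients of `X ^ k`; the
conditionals encode that binomial coefficients with negative lower index are zero. -/
theorem choose_add_two_pow_modEq (t n k : ℕ) :
    (n + 2 * 2 ^ t).choose k ≡ n.choose k + 2 * (if 2 ^ t ≤ k then n.choose (k - 2 ^ t) else 0) +
      (if 2 * 2 ^ t ≤ k then n.choose (k - 2 * 2 ^ t) else 0) [MOD 4] := by
  rw [← ZMod.natCast_eq_natCast_iff]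
  have h := congrArg (fun p => Polynomial.coeff p k)
    (show (1 + Polynomial.X : Polynomial (ZMod 4)) ^ (n + 2 * 2 ^ t) =
      (1 + Polynomial.X) ^ n + Polynomial.C 2 * ((1 + Polynomial.X) ^ n * Polynomial.X ^ 2 ^ t) +
        (1 + Polynomial.X) ^ n * Polynomial.X ^ (2 * 2 ^ t) by
      rw [pow_add, one_add_X_pow_two_pow_succ, show Polynomial.C (2 : ZMod 4) = 2 from rfl]
      ring)
  simp only [Polynomial.coeff_add, Polynomial.coeff_C_mul, Polynomial.coeff_mul_X_pow',
    Polynomial.coeff_one_add_X_pow] at h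
  rw [h]
  push_cast
  rfl

/-- Lemma 3.7: for `s ≥ 2` and `0 ≤ α, β < 2^(s-1)`, the five congruences modulo 4:
(1) `C(α + 2^s, β + 2^(s-1)) ≡ 2·C(α, β)`;
(2) `C(α + 2^s, β + 2^s) ≡ C(α, β)`;
(3) `C(α + 2^(s-1) + 2^s, β + 2^(s-1)) ≡ C(α + 2^(s-1), β + 2^(s-1)) + 2·C(α + 2^(s-1), β)`;
(4) `C(α + 2^(s-1) + 2^s, β + 2^s) ≡ C(α + 2^(s-1), β) + 2·C(α + 2^(s-1), β + 2^(s-1))`;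
(5) `C(α + 2^(s-1) + 2^s, β + 2^(s-1) + 2^s) ≡ C(α + 2^(s-1), β + 2^(s-1))`. -/
theorem choose_congr_mod_four (s α β : ℕ) (hs : 2 ≤ s)
    (hα : α < 2 ^ (s - 1)) (hβ : β < 2 ^ (s - 1)) :
    ((α + 2 ^ s).choose (β + 2 ^ (s - 1)) ≡ 2 * α.choose β [MOD 4]) ∧
    ((α + 2 ^ s).choose (β + 2 ^ s) ≡ α.choose β [MOD 4]) ∧
    ((α + 2 ^ (s - 1) + 2 ^ s).choose (β + 2 ^ (s - 1)) ≡
      (α + 2 ^ (s - 1)).choose (β + 2 ^ (s - 1)) + 2 * (α + 2 ^ (s - 1)).choose β [MOD 4]) ∧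
    ((α + 2 ^ (s - 1) + 2 ^ s).choose (β + 2 ^ s) ≡
      (α + 2 ^ (s - 1)).choose β + 2 * (α + 2 ^ (s - 1)).choose (β + 2 ^ (s - 1)) [MOD 4]) ∧
    ((α + 2 ^ (s - 1) + 2 ^ s).choose (β + 2 ^ (s - 1) + 2 ^ s) ≡
      (α + 2 ^ (s - 1)).choose (β + 2 ^ (s - 1)) [MOD 4]) := by
  obtain ⟨t, rfl⟩ : ∃ t, s = t + 1 := ⟨s - 1, by omega⟩
  have key := choose_add_two_pow_modEq t
  rw [Nat.add_sub_cancel] at *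
  rw [show 2 ^ (t + 1) = 2 * 2 ^ t by ring]
  generalize 2 ^ t = q at *
  refine ⟨?_, ?_, ?_, ?_, ?_⟩
  · have h := key α (β + q)
    rwa [if_pos (by omega), if_neg (by omega), Nat.choose_eq_zero_of_lt (show α < β + q by omega),
      Nat.add_sub_cancel, zero_add, add_zero] at h
  · have h := key α (β + 2 * q)
    rwa [if_pos (by omega), if_pos (by omega),
      Nat.choose_eq_zero_of_lt (show α < β + 2 * q by omega),
      Nat.choose_eq_zero_of_lt (show α < β + 2 * q - q by omega),
      Nat.add_sub_cancel, mul_zero, zero_add, zero_add] at h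
  · have h := key (α + q) (β + q)
    rwa [if_pos (by omega), if_neg (by omega), Nat.add_sub_cancel, add_zero] at h
  · have h := key (α + q) (β + 2 * q)
    rwa [if_pos (by omega), if_pos (by omega),
      Nat.choose_eq_zero_of_lt (show α + q < β + 2 * q by omega),
      show β + 2 * q - q = β + q by omega, Nat.add_sub_cancel, zero_add,
      add_comm (2 * _)] at h
  · have h := key (α + q) (β + q + 2 * q)
    rwa [if_pos (by omega), if_pos (by omega),
      Nat.choose_eq_zero_of_lt (show α + q < β + q + 2 * q by omega),
      Nat.choose_eq_zero_of_lt (show α + q < β + q + 2 * q - q by omega),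
      Nat.add_sub_cancel, mul_zero, zero_add, zero_add] at h
end

section
/- Let f : ℤ_2 → ℤ_2 be a 1-Lipschitz function that is uniformly differentiable modulo 2 with N_1(f) = 1. Then f is measure-preserving (with respect to the Haar probability measure on ℤ_2) if and only if f(0) + f(1) ≡ 1 (mod 2), (f(2) − f(0))/2 ≡ 1 (mod 2), and (f(3) − f(1))/2 ≡ 1 (mod 2). -/
/-!
For a 1-Lipschitz map `f` on `ℤ_[2]`, being measure-preserving, being surjective and being an
isometry are equivalent. Indeed `f` induces a self-map of the finite ring `ℤ/2ⁿ` for every `n`;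
surjectivity of `f` means (by compactness) that all these maps are surjective, the isometry property
means that they are all injective, and on a finite set the two agree. A measure-preserving `f` is
surjective since the complement of its compact range is an open null set. Conversely, a surjective
isometry pulls balls back to balls of the same radius, and balls generate the Borel sets.

It remains to recognise isometries. Those clearly satisfy the three congruences: `f 0 - f 1` has
norm `1`, and `f 2 - f 0`, `f 3 - f 1` have norm `1/2`. For the converse, let `d` be a derivative
of `f` modulo `2`. Expanding `f` around `u` and around `u + 2` shows that `d` modulo `2` depends
only on `u` modulo `2`, and the last two congruences say that `d 0` and `d 1` are odd. So `d` is odd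
everywhere and `‖f x - f y‖ = ‖x - y‖` whenever `x ≡ y (mod 2)`, while the first congruence
deals with `x ≢ y (mod 2)`.
-/


open MeasureTheory

noncomputable instance : MeasurableSpace ℤ_[2] := borel _
instance : BorelSpace ℤ_[2] := ⟨rfl⟩

/-- The normalized Haar probability measure on the compact additive group `ℤ_[2]`. -/
noncomputable def haarZ2 : Measure ℤ_[2] :=
  Measure.addHaarMeasure ⟨⟨Set.univ, isCompact_univ⟩, by simp⟩

/-- `f` is uniformly differentiable modulo `2` with `N₁(f) = 1`. -/
def UnifDiffMod2 (f : ℤ_[2] → ℤ_[2]) : Prop :=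
  ∃ d : ℤ_[2] → ℤ_[2], ∀ (u h : ℤ_[2]) (s : ℕ), 1 ≤ s →
    (2 : ℤ_[2]) ^ (s + 1) ∣ f (u + (2 : ℤ_[2]) ^ s * h) - (f u + (2 : ℤ_[2]) ^ s * h * d u)

/-! ### Parity and congruences in `ℤ_[2]` -/

lemma two_dvd_iff (x : ℤ_[2]) : (2 : ℤ_[2]) ∣ x ↔ ‖x‖ < 1 := by
  have := PadicInt.norm_lt_one_iff_dvd (p := 2) x
  exact_mod_cast this.symm

lemma norm_eq_one_iff (x : ℤ_[2]) : ‖x‖ = 1 ↔ ¬ (2 : ℤ_[2]) ∣ x := by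
  rw [two_dvd_iff, not_lt]
  exact ⟨fun h => h.ge, fun h => le_antisymm (PadicInt.norm_le_one x) h⟩

lemma two_dvd_or (x : ℤ_[2]) : (2 : ℤ_[2]) ∣ x ∨ (2 : ℤ_[2]) ∣ x - 1 := by
  obtain ⟨n, hn, h⟩ := PadicInt.exists_mem_range (p := 2) x
  rw [PadicInt.maximalIdeal_eq_span_p, Ideal.mem_span_singleton] at h
  interval_cases n
  · left; simpa using h
  · right; simpa using h

lemma not_two_dvd_one : ¬ (2 : ℤ_[2]) ∣ 1 := by
  rw [two_dvd_iff]; simp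

lemma not_two_dvd_iff (x : ℤ_[2]) : ¬ (2 : ℤ_[2]) ∣ x ↔ (2 : ℤ_[2]) ∣ x - 1 := by
  refine ⟨(two_dvd_or x).resolve_left, fun h h' => not_two_dvd_one ?_⟩
  simpa using dvd_sub h' h

lemma norm_two_pow (n : ℕ) : ‖(2 : ℤ_[2]) ^ n‖ = (2 : ℝ) ^ (-n : ℤ) := by
  exact_mod_cast PadicInt.norm_p_pow (p := 2) n

lemma norm_two : ‖(2 : ℤ_[2])‖ = (2 : ℝ)⁻¹ := by
  exact_mod_cast PadicInt.norm_p (p := 2)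

lemma norm_le_half_iff (x : ℤ_[2]) : ‖x‖ ≤ (2 : ℝ)⁻¹ ↔ (2 : ℤ_[2]) ∣ x := by
  have := PadicInt.norm_le_pow_iff_mem_span_pow (p := 2) x 1
  rw [Ideal.mem_span_singleton] at this
  simpa using this

lemma toZModPow_eq_iff (n : ℕ) (x y : ℤ_[2]) :
    PadicInt.toZModPow n x = PadicInt.toZModPow n y ↔ ‖x - y‖ ≤ (2 : ℝ) ^ (-n : ℤ) := by
  rw [← RingHom.sub_mem_ker_iff, PadicInt.ker_toZModPow]
  exact_mod_cast (PadicInt.norm_le_pow_iff_mem_span_pow (p := 2) (x - y) n).symm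

lemma toZModPow_surjective (n : ℕ) :
    Function.Surjective (PadicInt.toZModPow (p := 2) n) := by
  intro z
  exact ⟨(z.val : ℤ_[2]), by rw [map_natCast]; exact ZMod.natCast_zmod_val z⟩

/-- The condition on the van der Put quotient `z / 2`, which lives in `ℚ_[2]`, says that `z` has
norm exactly `1 / 2`. -/
lemma quotient_odd_iff (z : ℤ_[2]) (hz : (2 : ℤ_[2]) ∣ z) :
    ‖(z : ℚ_[2]) / 2 - 1‖ ≤ (2 : ℝ)⁻¹ ↔ ‖z‖ = (2 : ℝ)⁻¹ := by
  obtain ⟨w, rfl⟩ := hz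
  have h : ((2 * w : ℤ_[2]) : ℚ_[2]) / 2 - 1 = ((w - 1 : ℤ_[2]) : ℚ_[2]) := by
    have h2 : ((2 : ℤ_[2]) : ℚ_[2]) = 2 := rfl
    rw [PadicInt.coe_mul, PadicInt.coe_sub, PadicInt.coe_one, h2]
    field_simp
  rw [h, PadicInt.padic_norm_e_of_padicInt, norm_le_half_iff, ← not_two_dvd_iff,
    ← norm_eq_one_iff, norm_mul, norm_two]
  constructor
  · intro h; rw [h, mul_one]
  · intro h; linarith

/-! ### Surjective 1-Lipschitz maps and isometries -/

section Lipschitz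

variable {f : ℤ_[2] → ℤ_[2]}

/-- A 1-Lipschitz map descends to `ℤ/2ⁿ`. -/
lemma exists_reduction (hf : ∀ x y : ℤ_[2], ‖f x - f y‖ ≤ ‖x - y‖) (n : ℕ) :
    ∃ g : ZMod (2 ^ n) → ZMod (2 ^ n), ∀ x,
      PadicInt.toZModPow n (f x) = g (PadicInt.toZModPow n x) := by
  refine ⟨fun z => PadicInt.toZModPow n (f (Function.surjInv (toZModPow_surjective n) z)),
    fun x => ?_⟩
  rw [toZModPow_eq_iff]
  refine (hf _ _).trans ?_
  rw [← toZModPow_eq_iff, Function.surjInv_eq (toZModPow_surjective n)]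

lemma norm_eq_of_surjective (hf : ∀ x y : ℤ_[2], ‖f x - f y‖ ≤ ‖x - y‖)
    (hs : Function.Surjective f) (x y : ℤ_[2]) : ‖f x - f y‖ = ‖x - y‖ := by
  have key : ∀ n : ℕ, ‖f x - f y‖ ≤ (2 : ℝ) ^ (-n : ℤ) → ‖x - y‖ ≤ (2 : ℝ) ^ (-n : ℤ) := by
    intro n h
    obtain ⟨g, hg⟩ := exists_reduction hf n
    have hgs : Function.Surjective g := by
      intro z
      obtain ⟨v, rfl⟩ := toZModPow_surjective n z
      obtain ⟨u, rfl⟩ := hs v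
      exact ⟨_, (hg u).symm⟩
    rw [← toZModPow_eq_iff, hg, hg] at h
    exact (toZModPow_eq_iff n x y).1 (Finite.injective_iff_surjective.2 hgs h)
  refine le_antisymm (hf x y) ?_
  by_cases h0 : f x - f y = 0
  · rw [h0, norm_zero]
    refine le_of_forall_pos_lt_add fun ε hε => ?_
    obtain ⟨k, hk⟩ := PadicInt.exists_pow_neg_lt 2 hε
    rw [zero_add]
    refine (key k ?_).trans_lt (by exact_mod_cast hk)
    rw [h0, norm_zero]; positivity
  · have h1 := PadicInt.norm_eq_zpow_neg_valuation h0
    push_cast at h1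
    rw [h1]
    exact key _ h1.le

lemma continuous_of_norm_le (hf : ∀ x y : ℤ_[2], ‖f x - f y‖ ≤ ‖x - y‖) : Continuous f :=
  (LipschitzWith.of_dist_le_mul (K := 1) fun x y => by
    simpa [dist_eq_norm] using hf x y).continuous

lemma surjective_of_norm_eq (hf : ∀ x y : ℤ_[2], ‖f x - f y‖ = ‖x - y‖) :
    Function.Surjective f := by
  have hc := continuous_of_norm_le fun x y => (hf x y).le
  have hd : DenseRange f := by
    intro y
    refine Metric.mem_closure_range_iff.2 fun ε hε => ?_
    obtain ⟨n, hn⟩ := PadicInt.exists_pow_neg_lt 2 hε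
    obtain ⟨g, hg⟩ := exists_reduction (fun x y => (hf x y).le) n
    have hgi : Function.Injective g := by
      intro a b hab
      obtain ⟨u, rfl⟩ := toZModPow_surjective n a
      obtain ⟨v, rfl⟩ := toZModPow_surjective n b
      rw [← hg, ← hg, toZModPow_eq_iff, hf] at hab
      exact (toZModPow_eq_iff n u v).2 hab
    obtain ⟨a, ha⟩ := Finite.injective_iff_surjective.1 hgi (PadicInt.toZModPow n y)
    obtain ⟨u, rfl⟩ := toZModPow_surjective n a
    refine ⟨u, ?_⟩
    rw [← hg, eq_comm, toZModPow_eq_iff] at ha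
    rw [dist_eq_norm]
    exact ha.trans_lt (by exact_mod_cast hn)
  rw [← Set.range_eq_univ, ← (isCompact_range hc).isClosed.closure_eq]
  exact hd.closure_range

/-! ### Measure preservation -/

instance : haarZ2.IsAddHaarMeasure := by unfold haarZ2; infer_instance

instance : IsUltrametricDist ℤ_[2] :=
  IsUltrametricDist.isUltrametricDist_of_forall_norm_add_le_max_norm PadicInt.nonarchimedean

lemma surjective_of_measurePreserving (hf : ∀ x y : ℤ_[2], ‖f x - f y‖ ≤ ‖x - y‖)
    (hm : MeasurePreserving f haarZ2 haarZ2) : Function.Surjective f := by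
  have hcl : IsClosed (Set.range f) := (isCompact_range (continuous_of_norm_le hf)).isClosed
  have h0 : haarZ2 (Set.range f)ᶜ = 0 := by
    rw [← hm.measure_preimage hcl.measurableSet.compl.nullMeasurableSet]
    simp
  rw [hcl.isOpen_compl.measure_eq_zero_iff haarZ2] at h0
  exact Set.range_eq_univ.1 (Set.compl_empty_iff.1 h0)

lemma haarZ2_ball (x y : ℤ_[2]) (r : ℝ) :
    haarZ2 (Metric.ball x r) = haarZ2 (Metric.ball y r) := by
  rw [← measure_preimage_add_right haarZ2 (y - x) (Metric.ball y r)]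
  congr 1
  ext z
  simp only [Metric.mem_ball, Set.mem_preimage, dist_eq_norm]
  rw [show z + (y - x) - y = z - x by ring]

lemma measurePreserving_of_norm_eq (hf : ∀ x y : ℤ_[2], ‖f x - f y‖ = ‖x - y‖) :
    MeasurePreserving f haarZ2 haarZ2 := by
  have hmeas : Measurable f := (continuous_of_norm_le fun x y => (hf x y).le).measurable
  -- In an ultrametric space the balls, together with the empty set, form a π-system.
  let C : Set (Set ℤ_[2]) := {s | s = ∅ ∨ ∃ x r, s = Metric.ball x r}
  have hbasis : TopologicalSpace.IsTopologicalBasis C := by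
    refine TopologicalSpace.isTopologicalBasis_of_isOpen_of_nhds ?_ ?_
    · rintro s (rfl | ⟨x, r, rfl⟩)
      · exact isOpen_empty
      · exact Metric.isOpen_ball
    · intro a u ha hu
      obtain ⟨r, hr, h⟩ := Metric.isOpen_iff.1 hu a ha
      exact ⟨_, Or.inr ⟨a, r, rfl⟩, Metric.mem_ball_self hr, h⟩
  have hpi : IsPiSystem C := by
    rintro s (rfl | ⟨x, r, rfl⟩) t (rfl | ⟨y, r', rfl⟩) hne
    · simp at hne
    · simp at hne
    · simp at hne
    · rcases IsUltrametricDist.ball_subset_trichotomy x y (r := r) (s := r') with h | h | h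
      · rw [Set.inter_eq_left.2 h]; exact Or.inr ⟨x, r, rfl⟩
      · rw [Set.inter_eq_right.2 h]; exact Or.inr ⟨y, r', rfl⟩
      · exact absurd hne (Set.not_nonempty_iff_eq_empty.2 h.inter_eq)
  refine ⟨hmeas, ?_⟩
  have : IsFiniteMeasure (haarZ2.map f) := inferInstance
  refine ext_of_generate_finite C hbasis.borel_eq_generateFrom hpi ?_ ?_
  · rintro s (rfl | ⟨y, r, rfl⟩)
    · simp
    · obtain ⟨x, rfl⟩ := surjective_of_norm_eq hf y
      rw [Measure.map_apply hmeas Metric.isOpen_ball.measurableSet]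
      have : f ⁻¹' Metric.ball (f x) r = Metric.ball x r := by
        ext z
        simp only [Metric.mem_ball, Set.mem_preimage, dist_eq_norm, hf]
      rw [this]
      exact haarZ2_ball _ _ _
  · rw [Measure.map_apply hmeas MeasurableSet.univ, Set.preimage_univ]

/-! ### The derivative modulo 2 -/

lemma two_dvd_map_sub (hf : ∀ x y : ℤ_[2], ‖f x - f y‖ ≤ ‖x - y‖) {x y : ℤ_[2]}
    (h : (2 : ℤ_[2]) ∣ x - y) : (2 : ℤ_[2]) ∣ f x - f y := by
  rw [two_dvd_iff] at h ⊢
  exact (hf x y).trans_lt h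

/-- The derivative modulo `2` is odd at `u` as soon as `f` preserves the distance of `u` and
`u + 2`. -/
lemma odd_deriv {d : ℤ_[2] → ℤ_[2]}
    (hd : ∀ (u h : ℤ_[2]) (s : ℕ), 1 ≤ s →
      (2 : ℤ_[2]) ^ (s + 1) ∣ f (u + (2 : ℤ_[2]) ^ s * h) - (f u + (2 : ℤ_[2]) ^ s * h * d u))
    (u : ℤ_[2]) (h : ‖f (u + 2) - f u‖ = (2 : ℝ)⁻¹) : ¬ (2 : ℤ_[2]) ∣ d u := by
  rintro ⟨c, hc⟩
  obtain ⟨k, hk⟩ := hd u 1 1 le_rfl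
  rw [pow_one, mul_one, hc] at hk
  have h4 : f (u + 2) - f u = 2 * (2 * (k + c)) := by linear_combination hk
  rw [h4, norm_mul, norm_two] at h
  have h1 : ‖2 * (k + c)‖ = 1 := by linarith
  exact (norm_eq_one_iff _).1 h1 (dvd_mul_right _ _)

/-- The derivative modulo `2` is `2`-periodic: with `u = v + 2h`, add the expansion of `f` at `v`
with increment `2h` to the one at `u` with increment `-2h` when `h` is odd; an even `h` is reduced
to the odd case by passing through `v + 2`. -/
lemma deriv_congr {d : ℤ_[2] → ℤ_[2]}
    (hd : ∀ (u h : ℤ_[2]) (s : ℕ), 1 ≤ s →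
      (2 : ℤ_[2]) ^ (s + 1) ∣ f (u + (2 : ℤ_[2]) ^ s * h) - (f u + (2 : ℤ_[2]) ^ s * h * d u))
    (u v : ℤ_[2]) (h : (2 : ℤ_[2]) ∣ u - v) : (2 : ℤ_[2]) ∣ d u - d v := by
  have odd : ∀ v h : ℤ_[2], ¬ (2 : ℤ_[2]) ∣ h → (2 : ℤ_[2]) ∣ d (v + 2 * h) - d v := by
    intro v h hh
    obtain ⟨a, ha⟩ := hd v h 1 le_rfl
    obtain ⟨b, hb⟩ := hd (v + 2 * h) (-h) 1 le_rfl
    rw [pow_one] at ha hb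
    rw [show v + 2 * h + 2 * -h = v by ring] at hb
    have hp : Prime (2 : ℤ_[2]) := by exact_mod_cast PadicInt.prime_p (p := 2)
    have h2 : (2 : ℤ_[2]) * (h * (d (v + 2 * h) - d v)) = 2 * (2 * (a + b)) := by
      linear_combination ha + hb
    exact (hp.dvd_or_dvd ⟨_, mul_left_cancel₀ hp.ne_zero h2⟩).resolve_left hh
  obtain ⟨h, hh⟩ := h
  obtain rfl : u = v + 2 * h := by linear_combination hh
  by_cases h2 : (2 : ℤ_[2]) ∣ h
  · have e1 := odd v 1 not_two_dvd_one
    have e2 := odd (v + 2 * 1) (h - 1) (by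
      rw [not_two_dvd_iff]
      convert dvd_sub h2 (dvd_refl 2) using 1
      ring)
    rw [show v + 2 * 1 + 2 * (h - 1) = v + 2 * h by ring] at e2
    simpa using dvd_add e2 e1
  · exact odd v h h2

lemma norm_eq_of_congruences (hf : ∀ x y : ℤ_[2], ‖f x - f y‖ ≤ ‖x - y‖) (hud : UnifDiffMod2 f)
    (h01 : (2 : ℤ_[2]) ∣ f 0 + f 1 - 1) (h20 : ‖f 2 - f 0‖ = (2 : ℝ)⁻¹)
    (h31 : ‖f 3 - f 1‖ = (2 : ℝ)⁻¹) (x y : ℤ_[2]) : ‖f x - f y‖ = ‖x - y‖ := by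
  obtain ⟨d, hd⟩ := hud
  have hodd : ∀ u, ¬ (2 : ℤ_[2]) ∣ d u := by
    intro u hu
    rcases two_dvd_or u with h | h
    · refine odd_deriv hd 0 (by simpa using h20) ((dvd_iff_dvd_of_dvd_sub ?_).1 hu)
      exact deriv_congr hd u 0 (by simpa using h)
    · refine odd_deriv hd 1 ?_ ((dvd_iff_dvd_of_dvd_sub (deriv_congr hd u 1 h)).1 hu)
      rw [show (1 : ℤ_[2]) + 2 = 3 by norm_num]; exact h31
  by_cases hxy : x - y = 0
  · rw [sub_eq_zero.1 hxy]; simp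
  by_cases h2 : (2 : ℤ_[2]) ∣ x - y
  · -- Write `x - y = 2 ^ s * w` with `w` odd; then `f x - f y = 2 ^ s * (w * d y + 2 * k)`.
    have hspec := PadicInt.unitCoeff_spec hxy
    set s := (x - y).valuation with hs
    set w : ℤ_[2] := ((PadicInt.unitCoeff hxy : ℤ_[2]ˣ) : ℤ_[2])
    have hw : ‖w‖ = 1 := PadicInt.norm_units _
    push_cast at hspec
    have hs1 : 1 ≤ s := by
      by_contra hcon
      have h0 : s = 0 := by omega
      rw [h0, pow_zero, mul_one] at hspec
      exact (norm_eq_one_iff w).1 hw (hspec ▸ h2)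
    obtain ⟨k, hk⟩ := hd y w s hs1
    rw [show y + 2 ^ s * w = x by linear_combination -hspec] at hk
    have hfx : f x - f y = 2 ^ s * (w * d y + 2 * k) := by linear_combination hk
    have hone : ‖w * d y + 2 * k‖ = 1 := by
      rw [norm_eq_one_iff, dvd_add_left (dvd_mul_right _ _), ← norm_eq_one_iff, norm_mul, hw,
        one_mul, norm_eq_one_iff]
      exact hodd y
    rw [hfx, hspec, norm_mul, norm_mul, hone, hw, mul_comm]
  · rw [(norm_eq_one_iff _).2 h2, norm_eq_one_iff]
    intro hcon
    have h01' : ¬ (2 : ℤ_[2]) ∣ f 0 + f 1 := (not_two_dvd_iff _).2 h01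
    apply h01'
    have close : ∀ {u v : ℤ_[2]}, (2 : ℤ_[2]) ∣ u - v → ∃ c, f u - f v = 2 * c :=
      fun h => two_dvd_map_sub hf h
    obtain ⟨c, hc⟩ := hcon
    rcases two_dvd_or x with hx | hx <;> rcases two_dvd_or y with hy | hy
    · exact absurd (dvd_sub hx hy) h2
    · obtain ⟨a, ha⟩ := close (u := x) (v := 0) (by simpa using hx)
      obtain ⟨b, hb⟩ := close hy
      exact ⟨c - a + b + f 1, by linear_combination hc - ha + hb⟩
    · obtain ⟨a, ha⟩ := close hx
      obtain ⟨b, hb⟩ := close (u := y) (v := 0) (by simpa using hy)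
      exact ⟨c - a + b + f 0, by linear_combination hc - ha + hb⟩
    · exact absurd (by simpa using dvd_sub hx hy) h2

end Lipschitz

/-- Proposition 4.2: a uniformly differentiable modulo 2, 1-Lipschitz function `f` on `ℤ_[2]`
is measure-preserving (w.r.t. the Haar probability measure) iff
`f(0) + f(1) ≡ 1 (mod 2)`, `(f(2) − f(0))/2 ≡ 1 (mod 2)` and `(f(3) − f(1))/2 ≡ 1 (mod 2)`. -/
theorem measurePreserving_iff_vanDerPut (f : ℤ_[2] → ℤ_[2])
    (hf : ∀ x y : ℤ_[2], ‖f x - f y‖ ≤ ‖x - y‖) (hud : UnifDiffMod2 f) :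
    MeasurePreserving f haarZ2 haarZ2 ↔
      ((2 : ℤ_[2]) ∣ f 0 + f 1 - 1 ∧
        ‖((f 2 - f 0 : ℤ_[2]) : ℚ_[2]) / 2 - 1‖ ≤ (2 : ℝ)⁻¹ ∧
        ‖((f 3 - f 1 : ℤ_[2]) : ℚ_[2]) / 2 - 1‖ ≤ (2 : ℝ)⁻¹) := by
  have hd20 : (2 : ℤ_[2]) ∣ f 2 - f 0 := two_dvd_map_sub hf (by simp)
  have hd31 : (2 : ℤ_[2]) ∣ f 3 - f 1 :=
    two_dvd_map_sub hf (by rw [show (3 : ℤ_[2]) - 1 = 2 by norm_num])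
  rw [quotient_odd_iff _ hd20, quotient_odd_iff _ hd31]
  constructor
  · intro hm
    have hiso := norm_eq_of_surjective hf (surjective_of_measurePreserving hf hm)
    refine ⟨?_, ?_, ?_⟩
    · have h := hiso 0 1
      rw [zero_sub, norm_neg, norm_one, norm_eq_one_iff] at h
      rw [← not_two_dvd_iff]
      intro h'
      apply h
      convert dvd_sub h' (dvd_mul_right 2 (f 1)) using 1
      ring
    · rw [hiso, sub_zero, norm_two]
    · rw [hiso, show (3 : ℤ_[2]) - 1 = 2 by norm_num, norm_two]
  · rintro ⟨h01, h20, h31⟩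
    exact measurePreserving_of_norm_eq (norm_eq_of_congruences hf hud h01 h20 h31)
end
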